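/- Let X, X_1, ..., X_n be exchangeable real-valued random variables (not necessarily almost surely distinct). For k ∈ {1, ..., n}, let X_(k) denote the k-th smallest value among X_1, ..., X_n. Then Pr(X ≤ X_(k)) ≥ k/(n+1). -/

import Mathlib

open MeasureTheory

/-- The `k`-th smallest value (the `k`-th order statistic, `1 ≤ k ≤ n`) among
`v 0, …, v (n-1)`: the least real `x` such that at least `k` of the values are `≤ x`. -/
noncomputable def orderStat {n : ℕ} (k : ℕ) (v : Fin n → ℝ) : ℝ :=
  sInf {x : ℝ | k ≤ (Finset.univ.filter (fun i => v i ≤ x)).card}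



/-- The number of coordinates strictly below coordinate `j`. -/
noncomputable def rankBelow {m : ℕ} (y : Fin m → ℝ) (j : Fin m) : ℕ :=
  ∑ i, Set.indicator {z : Fin m → ℝ | z i < z j} (fun _ => 1) y

lemma rankBelow_eq {m : ℕ} (y : Fin m → ℝ) (j : Fin m) :
    rankBelow y j = (Finset.univ.filter (fun i => y i < y j)).card := by
  classical
  simp [rankBelow, Set.indicator_apply]

lemma measurable_rankBelow {m : ℕ} (j : Fin m) :
    Measurable (fun y : Fin m → ℝ => rankBelow y j) := by
  unfold rankBelow
  refine Finset.measurable_fun_sum _ (fun i _ => ?_)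
  exact measurable_const.indicator
    (measurableSet_lt (measurable_pi_apply i) (measurable_pi_apply j))

lemma card_rankBelow {m : ℕ} (y : Fin m → ℝ) (k : ℕ) (hk : k ≤ m) :
    k ≤ (Finset.univ.filter (fun j => rankBelow y j < k)).card := by
  classical
  by_contra! h
  have hne : (Finset.univ.filter (fun j => ¬ rankBelow y j < k)).Nonempty := by
    rw [← Finset.card_pos]
    have := Finset.card_filter_add_card_filter_not (s := (Finset.univ : Finset (Fin m)))
      (fun j => rankBelow y j < k)
    rw [Finset.card_univ, Fintype.card_fin] at this
    omega
  obtain ⟨j, hj, hmin⟩ := Finset.exists_min_image _ y hne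
  refine (Finset.mem_filter.1 hj).2 ?_
  rw [rankBelow_eq]
  refine lt_of_le_of_lt (Finset.card_le_card ?_) h
  intro i hi
  rw [Finset.mem_filter] at hi ⊢
  refine ⟨Finset.mem_univ _, ?_⟩
  by_contra hc
  exact absurd (hmin i (Finset.mem_filter.2 ⟨Finset.mem_univ _, hc⟩)) (not_le.2 hi.2)

lemma le_orderStat_of_rankBelow {n : ℕ} (y : Fin (n + 1) → ℝ) (k : ℕ) (hkn : k ≤ n)
    (h : rankBelow y 0 < k) : y 0 ≤ orderStat k (fun i : Fin n => y i.succ) := by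
  classical
  unfold orderStat
  refine le_csInf ?_ ?_
  · obtain ⟨M, hM⟩ := (Set.finite_range (fun i : Fin n => y i.succ)).bddAbove
    refine ⟨M, ?_⟩
    have : (Finset.univ.filter (fun i : Fin n => y i.succ ≤ M)) = Finset.univ :=
      Finset.filter_true_of_mem (fun i _ => hM ⟨i, rfl⟩)
    simpa [this] using hkn
  · intro x hx
    by_contra! hlt
    rw [rankBelow_eq] at h
    have hx' : k ≤ (Finset.univ.filter (fun i : Fin n => y i.succ ≤ x)).card := hx
    rw [← Finset.card_map (Fin.succEmb n)] at hx'
    refine absurd (hx'.trans (Finset.card_le_card ?_)) (not_le.2 h)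
    intro i hi
    obtain ⟨a, ha, rfl⟩ := Finset.mem_map.1 hi
    exact Finset.mem_filter.2 ⟨Finset.mem_univ _, lt_of_le_of_lt (Finset.mem_filter.1 ha).2 hlt⟩

lemma rankBelow_perm {m : ℕ} (y : Fin m → ℝ) (σ : Equiv.Perm (Fin m)) (j : Fin m) :
    rankBelow (fun i => y (σ i)) j = rankBelow y (σ j) := by
  classical
  simp only [rankBelow, Set.indicator_apply, Set.mem_ofPred_eq]
  exact Equiv.sum_comp σ (fun i => if y i < y (σ j) then 1 else 0)

/-- Let `X 0, X 1, …, X n` be exchangeable real-valued random variables (where `X 0` plays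
the role of the test variable `X`), with ties allowed.  For `1 ≤ k ≤ n`, the probability
that `X 0` is at most the `k`-th smallest among `X 1, …, X n` is at least `k/(n+1)`. -/
theorem exchangeable_rank_quantile_ge
    {Ω : Type*} [MeasurableSpace Ω] (μ : Measure Ω) [IsProbabilityMeasure μ]
    (n : ℕ) (X : Fin (n + 1) → Ω → ℝ) (hX : ∀ i, Measurable (X i))
    (hexch : ∀ σ : Equiv.Perm (Fin (n + 1)),
      Measure.map (fun ω => fun i => X (σ i) ω) μ = Measure.map (fun ω => fun i => X i ω) μ)
    (k : ℕ) (hk1 : 1 ≤ k) (hkn : k ≤ n) :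
    (k : ENNReal) / ((n : ENNReal) + 1) ≤
      μ {ω | X 0 ω ≤ orderStat k (fun i : Fin n => X i.succ ω)} := by
  classical
  have hY : Measurable (fun ω => fun i => X i ω) := measurable_pi_lambda _ hX
  have hS : ∀ j : Fin (n + 1), MeasurableSet {y : Fin (n + 1) → ℝ | rankBelow y j < k} :=
    fun j => measurableSet_lt (measurable_rankBelow j) measurable_const
  have hT : ∀ j : Fin (n + 1), MeasurableSet {ω | rankBelow (fun i => X i ω) j < k} :=
    fun j => hY (hS j)
  have heq : ∀ j : Fin (n + 1), μ {ω | rankBelow (fun i => X i ω) j < k} =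
      μ {ω | rankBelow (fun i => X i ω) 0 < k} := by
    intro j
    have h := congrArg (fun ν => ν {y : Fin (n + 1) → ℝ | rankBelow y 0 < k})
      (hexch (Equiv.swap 0 j))
    rw [Measure.map_apply (measurable_pi_lambda _ fun i => hX _) (hS 0),
      Measure.map_apply hY (hS 0)] at h
    rw [Set.preimage_setOf_eq, Set.preimage_setOf_eq] at h
    rw [← h]
    congr 1
    ext ω
    have := rankBelow_perm (fun i => X i ω) (Equiv.swap 0 j) 0
    rw [Equiv.swap_apply_left] at this
    simp only [Set.mem_ofPred_eq]
    rw [this]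
  have hsum : (k : ENNReal) ≤ ∑ j : Fin (n + 1), μ {ω | rankBelow (fun i => X i ω) j < k} := by
    calc (k : ENNReal) = ∫⁻ _, (k : ENNReal) ∂μ := by simp
      _ ≤ ∫⁻ ω, ∑ j : Fin (n + 1),
          Set.indicator {ω | rankBelow (fun i => X i ω) j < k} (fun _ => (1 : ENNReal)) ω ∂μ := by
        refine lintegral_mono (fun ω => ?_)
        have := card_rankBelow (fun i => X i ω) k (by omega)
        simp only [Set.indicator_apply, Set.mem_ofPred_eq]
        rw [Finset.sum_boole]
        exact_mod_cast this
      _ = _ := by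
        rw [lintegral_finsetSum _ (fun j _ => measurable_const.indicator (hT j))]
        refine Finset.sum_congr rfl (fun j _ => ?_)
        rw [lintegral_indicator (hT j)]
        simp
  rw [Finset.sum_congr rfl (fun j _ => heq j)] at hsum
  simp only [Finset.sum_const, Finset.card_univ, Fintype.card_fin, nsmul_eq_mul] at hsum
  refine le_trans ?_ (measure_mono (μ := μ) (s := {ω | rankBelow (fun i => X i ω) 0 < k})
    (fun ω hω => le_orderStat_of_rankBelow (fun i => X i ω) k hkn hω))
  refine ENNReal.div_le_of_le_mul' ?_
  push_cast at hsum
  exact hsum
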